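/- arXiv:math/9910188 — 5 statements merged into one kernel-verified Lean document; each statement's English description precedes it below -/
import Mathlib

section
/- Let G be a finite-dimensional Lie algebra over a field k and let O : G* → G be a skewsymmetric linear isomorphism. Define the skewsymmetric bilinear form ω on G by ω(x, y) = ⟨O⁻¹(x), y⟩. Then ω is a 2-cocycle on G (i.e., ω(x, [y, z]) + ω(y, [z, x]) + ω(z, [x, y]) = 0 for all x, y, z ∈ G) if and only if O satisfies O(O(u)·v − O(v)·u) = [O(u), O(v)] for all u, v ∈ G*. -/
/-- The coadjoint action of `X ∈ G` on `u ∈ G*`: `⟨X·u, Y⟩ = −⟨u, [X, Y]⟩`. -/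
noncomputable def coad {k : Type*} [Field k] {L : Type*} [LieRing L] [LieAlgebra k L]
    (X : L) (u : Module.Dual k L) : Module.Dual k L :=
  - (u ∘ₗ (LieAlgebra.ad k L X))

/-!
The coadjoint action makes `Dual R L` a Lie module. For skewsymmetric `ω`, moving `⁅x, y⁆` into the
first slot of `ω z ⁅x, y⁆` turns the cyclic sum of the 2-cocycle condition into
`(⁅x, ω y⁆ - ⁅y, ω x⁆ - ω ⁅x, y⁆) z`, so `ω` is a 2-cocycle iff `x ↦ ω x` is a 1-cocycle with values
in `Dual R L`. When this map is `O⁻¹`, substituting `x = O u`, `y = O v` and applying `O` gives the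
equation for `O`.
-/

open LieModule.Cohomology Module

section

variable {R L M : Type*} [CommRing R] [LieRing L] [LieAlgebra R L]
  [AddCommGroup M] [Module R M] [LieRingModule L M] [LieModule R L M]

lemma cyclic_sum_eq_d₁₂_apply {ω : L →ₗ[R] Dual R L} (hω : ∀ x y, ω x y + ω y x = 0) (x y z : L) :
    ω x ⁅y, z⁆ + ω y ⁅z, x⁆ + ω z ⁅x, y⁆ = d₁₂ R L (Dual R L) ω x y z :=
  calc
    ω x ⁅y, z⁆ + ω y ⁅z, x⁆ + ω z ⁅x, y⁆ = ω x ⁅y, z⁆ - ω y ⁅x, z⁆ - ω ⁅x, y⁆ z := by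
      rw [← lie_skew z x, map_neg, eq_neg_of_add_eq_zero_left (hω z ⁅x, y⁆)]
      abel
    _ = d₁₂ R L (Dual R L) ω x y z := by
      simp only [d₁₂_apply_apply, LinearMap.sub_apply, Dual.lie_apply]
      abel

lemma d₁₂_eq_zero_iff {f : L →ₗ[R] M} :
    d₁₂ R L M f = 0 ↔ ∀ x y, ⁅x, f y⁆ - ⁅y, f x⁆ = f ⁅x, y⁆ := by
  simp only [Subtype.ext_iff, LinearMap.ext_iff, d₁₂_apply_coe_apply_apply,
    ZeroMemClass.coe_zero, LinearMap.zero_apply, sub_eq_zero]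

lemma cyclic_sum_eq_zero_iff_d₁₂_eq_zero {ω : L →ₗ[R] Dual R L}
    (hω : ∀ x y, ω x y + ω y x = 0) :
    (∀ x y z, ω x ⁅y, z⁆ + ω y ⁅z, x⁆ + ω z ⁅x, y⁆ = 0) ↔ d₁₂ R L (Dual R L) ω = 0 := by
  simp only [cyclic_sum_eq_d₁₂_apply hω, d₁₂_eq_zero_iff, d₁₂_apply_apply, LinearMap.sub_apply,
    LinearMap.ext_iff, sub_eq_zero]

lemma d₁₂_symm_eq_zero_iff (O : M ≃ₗ[R] L) :
    d₁₂ R L M O.symm = 0 ↔ ∀ u v, O (⁅O u, v⁆ - ⁅O v, u⁆) = ⁅O u, O v⁆ := by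
  simp only [d₁₂_eq_zero_iff, LinearEquiv.coe_coe, O.surjective.forall,
    LinearEquiv.symm_apply_apply, LinearEquiv.eq_symm_apply]

theorem nondegenerate_r_matrix_iff_two_cocycle_general (O : Dual R L ≃ₗ[R] L)
    (hskew : ∀ u v : Dual R L, u (O v) + v (O u) = 0) :
    (∀ x y z : L, O.symm x ⁅y, z⁆ + O.symm y ⁅z, x⁆ + O.symm z ⁅x, y⁆ = 0) ↔
      ∀ u v : Dual R L, O (⁅O u, v⁆ - ⁅O v, u⁆) = ⁅O u, O v⁆ := by
  have hω (x y : L) : O.symm x y + O.symm y x = 0 := by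
    simpa only [LinearEquiv.apply_symm_apply] using hskew (O.symm x) (O.symm y)
  exact (cyclic_sum_eq_zero_iff_d₁₂_eq_zero (ω := O.symm.toLinearMap) hω).trans
    (d₁₂_symm_eq_zero_iff O)

end

lemma coad_eq_lie {k L : Type*} [Field k] [LieRing L] [LieAlgebra k L] (x : L) (u : Dual k L) :
    coad x u = ⁅x, u⁆ :=
  rfl

/-- **Drinfel'd.** For a skewsymmetric linear isomorphism `O : G* → G`,
the form `ω(x, y) = ⟨O⁻¹ x, y⟩` is a 2-cocycle on `G` iff
`O(O(u)·v − O(v)·u) = [O(u), O(v)]` for all `u, v ∈ G*`. -/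
theorem nondegenerate_r_matrix_iff_two_cocycle (k : Type*) [Field k]
    (L : Type*) [LieRing L] [LieAlgebra k L] [FiniteDimensional k L]
    (O : Module.Dual k L ≃ₗ[k] L)
    (hskew : ∀ u v : Module.Dual k L, u (O v) + v (O u) = 0) :
    (∀ x y z : L,
        O.symm x ⁅y, z⁆ + O.symm y ⁅z, x⁆ + O.symm z ⁅x, y⁆ = 0) ↔
      (∀ u v : Module.Dual k L,
        O (coad (O u) v - coad (O v) u) = ⁅O u, O v⁆) := by
  simpa only [coad_eq_lie] using nondegenerate_r_matrix_iff_two_cocycle_general O hskew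
end

section
/- Let R be a commutative ring and ∂ : R → R a derivation. Define the bracket [X, Y] = X·∂(Y) − ∂(X)·Y on R and the bilinear form ω(X, Y) = ∂³(X)·Y. Then ω is a generalized 2-cocycle on the Lie algebra (R, [·,·]): for all X, Y, Z ∈ R, both ω(X, Y) + ω(Y, X) and ω(X, [Y, Z]) + ω(Y, [Z, X]) + ω(Z, [X, Y]) lie in the image of ∂ (as an additive map R → R). -/
/-!
Modulo the image of `∂` one can integrate by parts. Moving all three derivatives of `∂³X · Y`
from `X` to `Y` costs the sign `(-1)³`, which is the antisymmetry. Moving a single derivative gives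
`∂³X · [Y, Z] ∼ -∂²X · ∂[Y, Z]`, and since `∂[Y, Z] = Y · ∂²Z - ∂²Y · Z`, this equals
`T(X, Y, Z) - T(Z, X, Y)` with `T(X, Y, Z) = ∂²X · ∂²Y · Z`, so the cyclic sum telescopes.
-/

section LeibnizMap

variable {k R : Type*} [Ring k] [NonUnitalCommRing R] [Module k R]

/-- The bracket `[X, Y] = X ∂Y - ∂X Y` of vector fields on the line, a vector field `X ∂` being
encoded by its coefficient `X`. -/
def vectorFieldBracket (d : R → R) (X Y : R) : R :=
  X * d Y - d X * Y

/-- The product rule making an additive map a derivation. Unlike Mathlib's `Derivation`, it makes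
sense without a unit, so it covers smooth compactly supported functions on the line, where being
congruent modulo the image of `∂` means having the same integral. -/
def SatisfiesLeibniz (d : R → R) : Prop :=
  ∀ a b : R, d (a * b) = a * d b + d a * b

variable {d : R →ₗ[k] R}

theorem map_mul_smodEq_neg_mul_map (hd : SatisfiesLeibniz d) (a b : R) :
    d a * b ≡ -(a * d b) [SMOD LinearMap.range d] := by
  rw [SModEq.sub_mem, sub_neg_eq_add, add_comm, ← hd a b]
  exact LinearMap.mem_range_self d (a * b)

theorem iterate_map_mul_smodEq (hd : SatisfiesLeibniz d) (n : ℕ) (a b : R) :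
    d^[n] a * b ≡ (-1 : k) ^ n • (a * d^[n] b) [SMOD LinearMap.range d] := by
  induction n generalizing a with
  | zero => simp
  | succ n ih =>
    calc d^[n + 1] a * b
      _ ≡ (-1 : k) ^ n • (d a * d^[n] b) [SMOD LinearMap.range d] := ih (d a)
      _ ≡ (-1 : k) ^ n • -(a * d (d^[n] b)) [SMOD LinearMap.range d] :=
        (map_mul_smodEq_neg_mul_map hd a _).smul _
      _ = (-1 : k) ^ (n + 1) • (a * d^[n + 1] b) := by
        rw [Function.iterate_succ_apply', pow_succ, mul_neg_one, neg_smul, smul_neg]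

theorem iterate_map_mul_smodEq_neg_of_odd (hd : SatisfiesLeibniz d) {n : ℕ} (hn : Odd n)
    (a b : R) :
    d^[n] a * b ≡ -(d^[n] b * a) [SMOD LinearMap.range d] := by
  simpa [hn.neg_one_pow, mul_comm a] using iterate_map_mul_smodEq hd n a b

theorem map_vectorFieldBracket (hd : SatisfiesLeibniz d) (Y Z : R) :
    d (vectorFieldBracket d Y Z) = Y * d (d Z) - d (d Y) * Z := by
  rw [vectorFieldBracket, map_sub, hd Y, hd (d Y)]
  abel

theorem map_map_map_mul_vectorFieldBracket_smodEq (hd : SatisfiesLeibniz d) (X Y Z : R) :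
    d (d (d X)) * vectorFieldBracket d Y Z ≡
      d (d X) * d (d Y) * Z - d (d Z) * d (d X) * Y [SMOD LinearMap.range d] :=
  calc d (d (d X)) * vectorFieldBracket d Y Z
    _ ≡ -(d (d X) * d (vectorFieldBracket d Y Z)) [SMOD LinearMap.range d] :=
      map_mul_smodEq_neg_mul_map hd _ _
    _ = d (d X) * d (d Y) * Z - d (d Z) * d (d X) * Y := by
      rw [map_vectorFieldBracket hd, mul_sub, neg_sub, mul_assoc, mul_comm Y, ← mul_assoc,
        ← mul_assoc, mul_comm (d (d Z))]

theorem cyclic_sum_map_map_map_mul_vectorFieldBracket_smodEq_zero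
    (hd : SatisfiesLeibniz d) (X Y Z : R) :
    d (d (d X)) * vectorFieldBracket d Y Z + d (d (d Y)) * vectorFieldBracket d Z X +
      d (d (d Z)) * vectorFieldBracket d X Y ≡ 0 [SMOD LinearMap.range d] := by
  have telescoped :=
    ((map_map_map_mul_vectorFieldBracket_smodEq hd X Y Z).add
      (map_map_map_mul_vectorFieldBracket_smodEq hd Y Z X)).add
      (map_map_map_mul_vectorFieldBracket_smodEq hd Z X Y)
  convert telescoped using 1
  abel

end LeibnizMap

theorem partial_cubed_generalized_two_cocycle_general (R : Type*) [NonUnitalCommRing R]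
    (d : R → R)
    (hadd : ∀ a b : R, d (a + b) = d a + d b)
    (hleib : ∀ a b : R, d (a * b) = a * d b + d a * b) :
    let br : R → R → R := fun X Y => X * d Y - d X * Y
    let ω : R → R → R := fun X Y => d (d (d X)) * Y
    (∀ X Y : R, ω X Y + ω Y X ∈ Set.range d) ∧
      (∀ X Y Z : R, ω X (br Y Z) + ω Y (br Z X) + ω Z (br X Y) ∈ Set.range d) := by
  intro br ω
  let D : R →ₗ[ℤ] R := (AddMonoidHom.mk' d hadd).toIntLinearMap
  have hD : SatisfiesLeibniz D := hleib
  refine ⟨fun X Y => ?antisymm, fun X Y Z => ?cocycle⟩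
  case antisymm =>
    have h : ω X Y ≡ -ω Y X [SMOD LinearMap.range D] :=
      iterate_map_mul_smodEq_neg_of_odd hD (n := 3) (by decide) X Y
    rwa [SModEq.sub_mem, sub_neg_eq_add] at h
  case cocycle =>
    exact SModEq.zero.mp (cyclic_sum_map_map_map_mul_vectorFieldBracket_smodEq_zero hD X Y Z)

/-- For a commutative ring `R` with a derivation `∂`, the form
`ω(X, Y) = ∂³(X)·Y` is a generalized 2-cocycle on the Lie algebra of vector fields
`[X, Y] = X ∂Y − ∂X Y`: both `ω(X, Y) + ω(Y, X)` and
`ω(X, [Y, Z]) + ω(Y, [Z, X]) + ω(Z, [X, Y])` lie in the image of `∂`. -/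
theorem partial_cubed_generalized_two_cocycle (R : Type*) [CommRing R]
    (d : R → R)
    (hadd : ∀ a b : R, d (a + b) = d a + d b)
    (hleib : ∀ a b : R, d (a * b) = a * d b + d a * b) :
    let br : R → R → R := fun X Y => X * d Y - d X * Y
    let ω : R → R → R := fun X Y => d (d (d X)) * Y
    (∀ X Y : R, ω X Y + ω Y X ∈ Set.range d) ∧
      (∀ X Y Z : R, ω X (br Y Z) + ω Y (br Z X) + ω Z (br X Y) ∈ Set.range d) :=
  partial_cubed_generalized_two_cocycle_general R d hadd hleib
end

section
/- Let R be a commutative ring, ∂ : R → R a derivation, and μ ∈ R a constant (∂(μ) = 0). Define a bracket on R × R by [(X, f), (Y, g)] = (X·∂Y − ∂X·Y, ∂(X·g − Y·f + μ·(∂X·∂²Y − ∂²X·∂Y))). Then this bracket is skewsymmetric and satisfies the Jacobi identity, so that R × R with this bracket is a Lie ring (the Lie algebra G(μ)). -/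
/-!
The Jacobi identity involves third derivatives, but it splits into three short identities. The
wronskian `X Y' - X' Y` is a Lie bracket on `R` (that of the vector fields `X ∂`), the operators
`g ↦ (X g)'` form a module over it, and, because `μ` is constant, `(μ (X' Y'' - X'' Y'))'` is a
2-cocycle with values in that module; `G(μ)` is the extension defined by this cocycle.
-/

open LieModule.Cohomology

section Wronskian

variable {k R : Type*} [CommRing k] [CommRing R] [Algebra k R] (D : Derivation k R R)

/-- The wronskian `a b' - a' b` of a derivation, as a bilinear map. For the formal derivative of
polynomials this is `Polynomial.wronskianBilin`. -/
def wronskian : R →ₗ[k] R →ₗ[k] R :=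
  (LinearMap.mul k R).compl₂ (D : R →ₗ[k] R) - LinearMap.mul k R ∘ₗ (D : R →ₗ[k] R)

lemma wronskian_apply (a b : R) : wronskian D a b = a * D b - D a * b := rfl

lemma wronskian_self (a : R) : wronskian D a a = 0 := by
  rw [wronskian_apply]
  ring

lemma wronskian_leibniz (a b c : R) :
    wronskian D a (wronskian D b c) =
      wronskian D (wronskian D a b) c + wronskian D b (wronskian D a c) := by
  simp only [wronskian_apply]
  simp only [map_sub, Derivation.leibniz, smul_eq_mul]
  ring

lemma wronskian_mul (a b g : R) :
    wronskian D a b * g = a * D (b * g) - b * D (a * g) := by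
  simp only [wronskian_apply, Derivation.leibniz, smul_eq_mul]
  ring

lemma derivation_const_mul {μ : R} (hμ : D μ = 0) (a : R) : D (μ * a) = μ * D a := by
  rw [Derivation.leibniz, hμ, smul_zero, add_zero, smul_eq_mul]

/-- Applying `D` gives the cocycle condition for `(a, b) ↦ D (wronskian D (D a) (D b))`. -/
lemma wronskian_derivation_cocycle (a b c : R) :
    a * D (wronskian D (D b) (D c)) - b * D (wronskian D (D a) (D c))
        + c * D (wronskian D (D a) (D b))
        - wronskian D (D (wronskian D a b)) (D c) + wronskian D (D (wronskian D a c)) (D b)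
        - wronskian D (D (wronskian D b c)) (D a) = 0 := by
  simp only [wronskian_apply]
  simp only [map_add, map_sub, Derivation.leibniz, smul_eq_mul]
  ring

end Wronskian

/-- The Lie algebra of formal vector fields `X ∂`, `X ∈ R`, for a derivation `∂ = D` of `R`,
encoded as a type synonym of `R` whose bracket is the wronskian; for `D = d/dt` on the Laurent
polynomials it is the Witt algebra. It does not identify `X` and `Y` when `X • D = Y • D`. -/
def WittAlgebra {k R : Type*} [CommRing k] [CommRing R] [Algebra k R]
    (_D : Derivation k R R) : Type _ := R

/-- The module of densities `g dt` over `WittAlgebra D`, encoded as a type synonym of `R` on which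
`X` acts by the Lie derivative `g ↦ (X g)'`. -/
def WittDensity {k R : Type*} [CommRing k] [CommRing R] [Algebra k R]
    (_D : Derivation k R R) : Type _ := R

section LieAlgebra

variable {k R : Type*} [CommRing k] [CommRing R] [Algebra k R] (D : Derivation k R R)

instance : AddCommGroup (WittAlgebra D) := inferInstanceAs (AddCommGroup R)

instance : Module k (WittAlgebra D) := inferInstanceAs (Module k R)

instance : AddCommGroup (WittDensity D) := inferInstanceAs (AddCommGroup R)

instance : Module k (WittDensity D) := inferInstanceAs (Module k R)

/-- The identification of a vector field with its coefficient. -/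
def WittAlgebra.coeff : WittAlgebra D ≃ₗ[k] R := LinearEquiv.refl k R

/-- The identification of a density with its coefficient. -/
def WittDensity.coeff : WittDensity D ≃ₗ[k] R := LinearEquiv.refl k R

instance : Bracket (WittAlgebra D) (WittAlgebra D) where
  bracket X Y :=
    (WittAlgebra.coeff D).symm (wronskian D (WittAlgebra.coeff D X) (WittAlgebra.coeff D Y))

lemma WittAlgebra.coeff_lie (X Y : WittAlgebra D) :
    coeff D ⁅X, Y⁆ = wronskian D (coeff D X) (coeff D Y) := rfl

instance : LieRing (WittAlgebra D) where
  add_lie X Y Z := (WittAlgebra.coeff D).injective <| by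
    simp only [WittAlgebra.coeff_lie, map_add, LinearMap.add_apply]
  lie_add X Y Z := (WittAlgebra.coeff D).injective <| by
    simp only [WittAlgebra.coeff_lie, map_add]
  lie_self X := (WittAlgebra.coeff D).injective <| by
    rw [WittAlgebra.coeff_lie, wronskian_self, map_zero]
  leibniz_lie X Y Z := (WittAlgebra.coeff D).injective <| by
    simpa only [WittAlgebra.coeff_lie, map_add] using wronskian_leibniz D _ _ _

instance : LieAlgebra k (WittAlgebra D) where
  lie_smul t X Y := (WittAlgebra.coeff D).injective <| by
    simp only [WittAlgebra.coeff_lie, map_smul]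

instance : Bracket (WittAlgebra D) (WittDensity D) where
  bracket X g := (WittDensity.coeff D).symm (D (WittAlgebra.coeff D X * WittDensity.coeff D g))

lemma WittDensity.coeff_lie (X : WittAlgebra D) (g : WittDensity D) :
    coeff D ⁅X, g⁆ = D (WittAlgebra.coeff D X * coeff D g) := rfl

instance : LieRingModule (WittAlgebra D) (WittDensity D) where
  add_lie X Y g := (WittDensity.coeff D).injective <| by
    simp only [WittDensity.coeff_lie, map_add, add_mul]
  lie_add X g h := (WittDensity.coeff D).injective <| by
    simp only [WittDensity.coeff_lie, map_add, mul_add]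
  leibniz_lie X Y g := (WittDensity.coeff D).injective <| by
    simp only [WittDensity.coeff_lie, WittAlgebra.coeff_lie, map_add, wronskian_mul, map_sub,
      sub_add_cancel]

instance : LieModule k (WittAlgebra D) (WittDensity D) where
  smul_lie t X g := (WittDensity.coeff D).injective <| by
    simp only [WittDensity.coeff_lie, map_smul, smul_mul_assoc, Derivation.map_smul]
  lie_smul t X g := (WittDensity.coeff D).injective <| by
    simp only [WittDensity.coeff_lie, map_smul, mul_smul_comm, Derivation.map_smul]

/-- The Gelfand–Fuchs cochain `(X, Y) ↦ (μ (X' Y'' - X'' Y'))'` with values in densities. -/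
def gelfandFuchsCochain (μ : R) : twoCochain k (WittAlgebra D) (WittDensity D) where
  val :=
    let D₁ : WittAlgebra D →ₗ[k] R := (D : R →ₗ[k] R) ∘ₗ (WittAlgebra.coeff D : _ →ₗ[k] R)
    ((wronskian D).compl₁₂ D₁ D₁).compr₂
      ((WittDensity.coeff D).symm ∘ₗ (D : R →ₗ[k] R) ∘ₗ LinearMap.mulLeft k μ)
  property X := by
    simp [wronskian_self]

lemma coeff_gelfandFuchsCochain (μ : R) (X Y : WittAlgebra D) :
    WittDensity.coeff D (gelfandFuchsCochain D μ X Y) =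
      D (μ * wronskian D (D (WittAlgebra.coeff D X)) (D (WittAlgebra.coeff D Y))) := rfl

lemma gelfandFuchsCochain_mem_twoCocycle {μ : R} (hμ : D μ = 0) :
    gelfandFuchsCochain D μ ∈ twoCocycle k (WittAlgebra D) (WittDensity D) := by
  rw [mem_twoCocycle_iff]
  ext X Y Z
  apply (WittDensity.coeff D).injective
  have h := congrArg (fun a => D (μ * a)) (wronskian_derivation_cocycle D
    (WittAlgebra.coeff D X) (WittAlgebra.coeff D Y) (WittAlgebra.coeff D Z))
  simp only [d₂₃_apply, map_add, map_sub, WittDensity.coeff_lie, coeff_gelfandFuchsCochain,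
    WittAlgebra.coeff_lie, derivation_const_mul D hμ, mul_left_comm _ μ, LinearMap.zero_apply,
    map_zero, mul_add, mul_sub, mul_zero] at h ⊢
  exact h

/-- The Lie algebra `G(μ)`: the extension of the vector fields by the densities that is defined by
the Gelfand–Fuchs cocycle. -/
abbrev GelfandFuchsExtension {μ : R} (hμ : D μ = 0) : Type _ :=
  LieAlgebra.ofTwoCocycle ⟨gelfandFuchsCochain D μ, gelfandFuchsCochain_mem_twoCocycle D hμ⟩

/-- The coordinates `(X, f)` of an element of `G(μ)`. -/
def GelfandFuchsExtension.coords {μ : R} (hμ : D μ = 0) :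
    GelfandFuchsExtension D hμ ≃+ R × R where
  toEquiv := (LieAlgebra.ofProd _).symm.trans
    ((WittAlgebra.coeff D).toEquiv.prodCongr (WittDensity.coeff D).toEquiv)
  map_add' _ _ := rfl

lemma GelfandFuchsExtension.coords_lie {μ : R} (hμ : D μ = 0) (x y : GelfandFuchsExtension D hμ) :
    coords D hμ ⁅x, y⁆ =
      ((coords D hμ x).1 * D (coords D hμ y).1 - D (coords D hμ x).1 * (coords D hμ y).1,
        D ((coords D hμ x).1 * (coords D hμ y).2 - (coords D hμ y).1 * (coords D hμ x).2
          + μ * (D (coords D hμ x).1 * D (D (coords D hμ y).1)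
            - D (D (coords D hμ x).1) * D (coords D hμ y).1))) := by
  have density_component (X Y : WittAlgebra D) (f g : WittDensity D) :
      WittDensity.coeff D (gelfandFuchsCochain D μ X Y + ⁅X, g⁆ - ⁅Y, f⁆) =
        D (WittAlgebra.coeff D X * WittDensity.coeff D g
          - WittAlgebra.coeff D Y * WittDensity.coeff D f
          + μ * wronskian D (D (WittAlgebra.coeff D X)) (D (WittAlgebra.coeff D Y))) := by
    simp only [map_add, map_sub, coeff_gelfandFuchsCochain, WittDensity.coeff_lie]
    abel
  exact Prod.ext rfl (density_component _ _ _ _)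

end LieAlgebra

lemma lie_lie_cyclic {L : Type*} [LieRing L] (x y z : L) :
    ⁅⁅x, y⁆, z⁆ + ⁅⁅y, z⁆, x⁆ + ⁅⁅z, x⁆, y⁆ = 0 := by
  rw [← lie_skew ⁅x, y⁆ z, ← lie_skew ⁅y, z⁆ x, ← lie_skew ⁅z, x⁆ y, ← neg_add, ← neg_add,
    lie_jacobi, neg_zero]

/-- For a commutative ring `R` with a derivation `∂` and a constant `μ`
(`∂μ = 0`), the bracket
`[(X, f), (Y, g)] = (X Y' − X' Y, (X g − Y f + μ (X' Y'' − X'' Y'))')`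
on `R × R` is skewsymmetric and satisfies the Jacobi identity, i.e. `R × R` with this
bracket is a Lie ring (the Lie algebra `G(μ)`). -/
theorem G_mu_is_Lie_algebra (R : Type*) [CommRing R]
    (d : R → R)
    (hadd : ∀ a b : R, d (a + b) = d a + d b)
    (hleib : ∀ a b : R, d (a * b) = a * d b + d a * b)
    (μ : R) (hμ : d μ = 0) :
    let br : R × R → R × R → R × R := fun p q =>
      (p.1 * d q.1 - d p.1 * q.1,
        d (p.1 * q.2 - q.1 * p.2 + μ * (d p.1 * d (d q.1) - d (d p.1) * d q.1)))
    (∀ a b : R × R, br a b = - br b a) ∧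
      (∀ a b c : R × R, br (br a b) c + br (br b c) a + br (br c a) b = 0) := by
  intro br
  let D : Derivation ℤ R R := .mk' (AddMonoidHom.mk' d hadd).toIntLinearMap fun a b =>
    (hleib a b).trans (congrArg _ (mul_comm _ _))
  let e : GelfandFuchsExtension D hμ ≃+ R × R := GelfandFuchsExtension.coords D hμ
  have br_coords (x y : GelfandFuchsExtension D hμ) : br (e x) (e y) = e ⁅x, y⁆ :=
    (GelfandFuchsExtension.coords_lie D hμ x y).symm
  refine ⟨e.surjective.forall₂.mpr fun x y => ?_, e.surjective.forall₃.mpr fun x y z => ?_⟩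
  · rw [br_coords, br_coords, ← map_neg, lie_skew]
  · simp only [br_coords, ← map_add, lie_lie_cyclic, map_zero]
end

section
/- Let G and H be finite-dimensional Lie algebras over a field k, let φ : G → H be a Lie algebra homomorphism with dual map φ* : H* → G*, let O_G : G* → G be a skewsymmetric O-operator, and set O_H = φ ∘ O_G ∘ φ*. Equip G* with the bracket [u, v] = O_G(u)·v − O_G(v)·u and H* with the bracket [ū, v̄] = O_H(ū)·v̄ − O_H(v̄)·ū (coadjoint actions). Then φ* : H* → G* is a homomorphism of Lie algebras: φ*([ū, v̄]) = [φ*(ū), φ*(v̄)] for all ū, v̄ ∈ H*. -/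
section

variable {k : Type*} [Field k] {G : Type*} [LieRing G] [LieAlgebra k G]

theorem coad_apply (x : G) (u : Module.Dual k G) (y : G) : coad x u y = -u ⁅x, y⁆ :=
  rfl

variable {H : Type*} [LieRing H] [LieAlgebra k H] (φ : G →ₗ⁅k⁆ H)

theorem dualMap_coad_map (x : G) (u : Module.Dual k H) :
    φ.toLinearMap.dualMap (coad (φ x) u) = coad x (φ.toLinearMap.dualMap u) := by
  ext y
  calc coad (φ x) u (φ y) = -u ⁅φ x, φ y⁆ := coad_apply (φ x) u (φ y)
    _ = -u (φ ⁅x, y⁆) := by rw [LieHom.map_lie]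
    _ = coad x (φ.toLinearMap.dualMap u) y := (coad_apply x (φ.toLinearMap.dualMap u) y).symm

theorem dualMap_is_Lie_hom_general (O : Module.Dual k G → G) (u v : Module.Dual k H) :
    φ.toLinearMap.dualMap
        (coad (φ (O (φ.toLinearMap.dualMap u))) v - coad (φ (O (φ.toLinearMap.dualMap v))) u) =
      coad (O (φ.toLinearMap.dualMap u)) (φ.toLinearMap.dualMap v) -
        coad (O (φ.toLinearMap.dualMap v)) (φ.toLinearMap.dualMap u) := by
  rw [map_sub, dualMap_coad_map, dualMap_coad_map]

end

/-- **Remark 4.17.** With `O_G : G* → G` a skewsymmetric `O`-operator and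
`O_H = φ ∘ O_G ∘ φ*`, the dual map `φ* : H* → G*` is a homomorphism between the induced
Lie brackets `[u, v] = O(u)·v − O(v)·u` on `H*` and `G*`. -/
theorem dualMap_is_Lie_hom (k : Type*) [Field k]
    (G : Type*) [LieRing G] [LieAlgebra k G] [FiniteDimensional k G]
    (H : Type*) [LieRing H] [LieAlgebra k H] [FiniteDimensional k H]
    (φ : G →ₗ⁅k⁆ H)
    (OG : Module.Dual k G →ₗ[k] G)
    (hskew : ∀ u v : Module.Dual k G, u (OG v) + v (OG u) = 0)
    (hO : ∀ u v : Module.Dual k G,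
      OG (coad (OG u) v - coad (OG v) u) = ⁅OG u, OG v⁆) :
    let OH : Module.Dual k H →ₗ[k] H := φ.toLinearMap ∘ₗ OG ∘ₗ φ.toLinearMap.dualMap
    ∀ u v : Module.Dual k H,
      φ.toLinearMap.dualMap (coad (OH u) v - coad (OH v) u) =
        coad (OG (φ.toLinearMap.dualMap u)) (φ.toLinearMap.dualMap v) -
          coad (OG (φ.toLinearMap.dualMap v)) (φ.toLinearMap.dualMap u) := by
  intro _ u v
  exact dualMap_is_Lie_hom_general φ OG u v
end

section
/- Let G be a finite-dimensional Lie algebra over a field k with a skewsymmetric bilinear bracket [·,·]* on G*, let X·u denote the coadjoint action of G on G*, and let u·Y denote the action of G* on G defined by ⟨v, u·Y⟩ = −⟨[u, v]*, Y⟩. Define the bracket on G ⊕ G* by [(X, u), (Y, v)] = ([X, Y] + u·Y − v·X, [u, v]* + X·v − Y·u) and the symmetric pairing ((X, u), (Y, v)) = ⟨u, Y⟩ + ⟨v, X⟩. Then the pairing is ad-invariant: ([(X, u), (Y, v)], (Z, w)) = ((X, u), [(Y, v), (Z, w)]) for all X, Y, Z ∈ G and u, v, w ∈ G*. -/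
/-!
Once the two actions are transposed away, `([a, b], c)` becomes a sum over the cyclic
permutations of `(a, b, c)`. It is therefore invariant under `(a, b, c) ↦ (b, c, a)`, and the
symmetry of the pairing turns this cyclic invariance into ad-invariance.
-/

section CrossedBracket

variable {R M : Type*} [CommRing R] [AddCommGroup M] [Module R M]

/-- The coadjoint action of `M` on its dual defined by an arbitrary bilinear bracket `β` on `M`; for
a Lie bracket it is `coad`. -/
def coadjointAction (β : M →ₗ[R] M →ₗ[R] M) (x : M) (u : Module.Dual R M) : Module.Dual R M :=
  -(u ∘ₗ β x)

/-- The natural symmetric pairing on `M × Module.Dual R M`, the form shown to be invariant. -/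
def naturalPairing (a b : M × Module.Dual R M) : R :=
  a.2 b.1 + b.2 a.1

theorem coadjointAction_apply (β : M →ₗ[R] M →ₗ[R] M) (x y : M) (u : Module.Dual R M) :
    coadjointAction β x u y = -u (β x y) :=
  rfl

theorem naturalPairing_comm (a b : M × Module.Dual R M) :
    naturalPairing a b = naturalPairing b a :=
  add_comm _ _

variable [Module.IsReflexive R M]

/-- The action on `M` induced by a bilinear bracket `γ` on its dual: the coadjoint action of
`Module.Dual R M` on its own dual, carried over to `M` by reflexivity. -/
noncomputable def inducedAction
    (γ : Module.Dual R M →ₗ[R] Module.Dual R M →ₗ[R] Module.Dual R M)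
    (u : Module.Dual R M) (y : M) : M :=
  (Module.evalEquiv R M).symm (-((γ u).flip y))

/-- The bracket on `M × Module.Dual R M` built from brackets `β` on `M` and `γ` on its dual,
crossed by the actions which each of them induces on the other factor. -/
noncomputable def crossedBracket (β : M →ₗ[R] M →ₗ[R] M)
    (γ : Module.Dual R M →ₗ[R] Module.Dual R M →ₗ[R] Module.Dual R M)
    (a b : M × Module.Dual R M) : M × Module.Dual R M :=
  (β a.1 b.1 + inducedAction γ a.2 b.1 - inducedAction γ b.2 a.1,
    γ a.2 b.2 + coadjointAction β a.1 b.2 - coadjointAction β b.1 a.2)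

theorem apply_inducedAction (γ : Module.Dual R M →ₗ[R] Module.Dual R M →ₗ[R] Module.Dual R M)
    (u v : Module.Dual R M) (y : M) : v (inducedAction γ u y) = -γ u v y :=
  Module.apply_evalEquiv_symm_apply R M v _

variable {β : M →ₗ[R] M →ₗ[R] M}
  {γ : Module.Dual R M →ₗ[R] Module.Dual R M →ₗ[R] Module.Dual R M}

theorem naturalPairing_crossedBracket_eq_cyclic_sum (hβ : ∀ x y, β x y = -β y x)
    (hγ : ∀ u v, γ u v = -γ v u) (a b c : M × Module.Dual R M) :
    naturalPairing (crossedBracket β γ a b) c =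
      (a.2 (β b.1 c.1) + b.2 (β c.1 a.1) + c.2 (β a.1 b.1)) +
        (γ a.2 b.2 c.1 + γ b.2 c.2 a.1 + γ c.2 a.2 b.1) := by
  simp only [naturalPairing, crossedBracket, map_add, map_sub, LinearMap.add_apply,
    LinearMap.sub_apply, coadjointAction_apply, apply_inducedAction]
  rw [hβ c.1 a.1, hγ c.2 a.2, map_neg, LinearMap.neg_apply]
  ring

theorem naturalPairing_crossedBracket_rotate (hβ : ∀ x y, β x y = -β y x)
    (hγ : ∀ u v, γ u v = -γ v u) (a b c : M × Module.Dual R M) :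
    naturalPairing (crossedBracket β γ a b) c = naturalPairing (crossedBracket β γ b c) a := by
  simp only [naturalPairing_crossedBracket_eq_cyclic_sum hβ hγ]
  ring

theorem crossed_bracket_ad_invariant_pairing_general (hβ : ∀ x y, β x y = -β y x)
    (hγ : ∀ u v, γ u v = -γ v u) (a b c : M × Module.Dual R M) :
    naturalPairing (crossedBracket β γ a b) c = naturalPairing a (crossedBracket β γ b c) :=
  (naturalPairing_crossedBracket_rotate hβ hγ a b c).trans (naturalPairing_comm _ _)

end CrossedBracket

/-- **Remark A1.7.** For a skewsymmetric bilinear bracket `[·,·]*` on `G*`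
with induced action `⟨v, u·Y⟩ = −⟨[u, v]*, Y⟩`, the crossed bracket
`[(X, u), (Y, v)] = ([X, Y] + u·Y − v·X, [u, v]* + X·v − Y·u)` on `G ⊕ G*` leaves the
natural symmetric pairing `((X, u), (Y, v)) = ⟨u, Y⟩ + ⟨v, X⟩` ad-invariant. -/
theorem crossed_bracket_ad_invariant_pairing (k : Type*) [Field k]
    (L : Type*) [LieRing L] [LieAlgebra k L] [FiniteDimensional k L]
    (brs : Module.Dual k L →ₗ[k] Module.Dual k L →ₗ[k] Module.Dual k L)
    (hskew : ∀ u v : Module.Dual k L, brs u v = - brs v u) :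
    let act : Module.Dual k L → L → L := fun u Y =>
      (Module.evalEquiv k L).symm (-((brs u).flip Y))
    let br : L × Module.Dual k L → L × Module.Dual k L → L × Module.Dual k L := fun p q =>
      (⁅p.1, q.1⁆ + act p.2 q.1 - act q.2 p.1,
        brs p.2 q.2 + coad p.1 q.2 - coad q.1 p.2)
    let pair : L × Module.Dual k L → L × Module.Dual k L → k := fun p q =>
      p.2 q.1 + q.2 p.1
    ∀ a b c : L × Module.Dual k L, pair (br a b) c = pair a (br b c) :=
  crossed_bracket_ad_invariant_pairing_general (β := (LieAlgebra.ad k L : L →ₗ[k] L →ₗ[k] L))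
    (fun X Y => (lie_skew X Y).symm) hskew
end
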